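/- For every convex body K ⊂ ℝ², ξ_B(K − K) ≤ (4/√3)·ξ_B(K), where B is the Euclidean unit disk, and the constant 4/√3 is sharp (equality is approached by an equilateral triangle). -/

import Mathlib

open scoped RealInnerProductSpace Pointwise
open MeasureTheory

/-- A convex body: compact, convex, with nonempty interior. -/
def IsConvexBody {n : ℕ} (K : Set (EuclideanSpace ℝ (Fin n))) : Prop :=
  IsCompact K ∧ Convex ℝ K ∧ (interior K).Nonempty

/-- The (possibly non-symmetric) norm with unit ball `T°`: `‖v‖_T = max_{p ∈ T} ⟨p, v⟩`. -/
noncomputable def suppNorm {n : ℕ} (T : Set (EuclideanSpace ℝ (Fin n)))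
    (v : EuclideanSpace ℝ (Fin n)) : ℝ :=
  sSup ((fun p => ⟪p, v⟫) '' T)

/-- The vertex set `q 0, …, q (m-1)` cannot be translated into the interior of `K`. -/
def NotTranslatableInto {n : ℕ} (m : ℕ) (q : ℕ → EuclideanSpace ℝ (Fin n))
    (K : Set (EuclideanSpace ℝ (Fin n))) : Prop :=
  ∀ t : EuclideanSpace ℝ (Fin n), ∃ i < m, q i + t ∉ interior K

/-- `ξ_T(K)`: the length of the shortest closed billiard trajectory in `K` with geometry
given by `T`, characterized à la Bezdek–Bezdek as the infimum of `ℓ_T`-lengths of closed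
polygonal lines whose vertex set cannot be translated into the interior of `K`. -/
noncomputable def xi {n : ℕ} (T K : Set (EuclideanSpace ℝ (Fin n))) : ℝ :=
  sInf {ℓ : ℝ | ∃ m : ℕ, 2 ≤ m ∧ ∃ q : ℕ → EuclideanSpace ℝ (Fin n),
    NotTranslatableInto m q K ∧
    ℓ = ∑ i ∈ Finset.range m, suppNorm T (q ((i + 1) % m) - q i)}

/-- `ξ_B(K)`: the Euclidean version of `xi`. -/
noncomputable def xiB {n : ℕ} (K : Set (EuclideanSpace ℝ (Fin n))) : ℝ :=
  sInf {ℓ : ℝ | ∃ m : ℕ, 2 ≤ m ∧ ∃ q : ℕ → EuclideanSpace ℝ (Fin n),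
    NotTranslatableInto m q K ∧
    ℓ = ∑ i ∈ Finset.range m, ‖q ((i + 1) % m) - q i‖}

/-- The Euclidean width of `K`: the minimum over unit directions of the breadth. -/
noncomputable def widthB {n : ℕ} (K : Set (EuclideanSpace ℝ (Fin n))) : ℝ :=
  sInf {w : ℝ | ∃ p : EuclideanSpace ℝ (Fin n), ‖p‖ = 1 ∧
    w = sSup ((fun q => ⟪p, q⟫) '' K) - sInf ((fun q => ⟪p, q⟫) '' K)}

/-- The polar body `K° = {p : ⟨p, q⟩ ≤ 1 ∀ q ∈ K}`. -/
def polarBody {n : ℕ} (K : Set (EuclideanSpace ℝ (Fin n))) :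
    Set (EuclideanSpace ℝ (Fin n)) :=
  {p | ∀ q ∈ K, ⟪p, q⟫ ≤ 1}

/-!
If `q 0, …, q (m - 1)` cannot be translated into the interior of `K`, the sets `interior K - q i`
have no common point, and separating their product from the diagonal gives vectors `p i` with
`∑ p i = 0` and `∑ h (p i) ≤ ∑ ⟪p i, q i⟫`, where `h` is the support function of `K`. Put
`H = ∑ h (p i)`. A difference `v` of two partial sums of the `p i` has breadth `h v + h (-v) ≤ H` by
subadditivity, while bouncing back and forth in the direction `v` gives
`ξ (K - K) * ‖v‖ ≤ 4 * (h v + h (-v))`. So the closed polygon of partial sums has diameter at most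
`4 * H / ξ (K - K)`, and Jung's theorem puts it in a ball of radius `jungConstant n` times that.
Summation by parts around the center of the ball bounds `H ≤ ∑ ⟪p i, q i⟫` by this radius times the
length of `q`, and `H` cancels.

For an equilateral triangle `T` of side `s`, the hexagon `T - T` contains the disk of radius
`√3 / 2 * s`. As a closed polygon of length `L` lies in a ball of radius `L / 4`, this gives
`2 * √3 * s ≤ ξ (T - T)`. The medial triangle gives `ξ T ≤ 3 / 2 * s`.
-/

section SeparationFromDiagonal

variable {E ι : Type*} [NormedAddCommGroup E] [InnerProductSpace ℝ E] [Fintype ι]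

theorem exists_forall_eq_sum_inner [CompleteSpace E] (f : StrongDual ℝ (ι → E)) :
    ∃ p : ι → E, ∀ x, f x = ∑ i, ⟪p i, x i⟫ := by
  classical
  refine ⟨fun i => (InnerProductSpace.toDual ℝ E).symm
    (f.comp (ContinuousLinearMap.single ℝ (fun _ => E) i)), fun x => ?_⟩
  simp only [InnerProductSpace.toDual_symm_apply, ContinuousLinearMap.comp_apply,
    ContinuousLinearMap.single_apply, ← map_sum, Finset.univ_sum_single]

variable (ι E) in
/-- The diagonal of `ι → E`, that is, the subspace of constant families. A family of sets has a
common point exactly when its product meets this subspace. -/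
def diagonalSubmodule : Submodule ℝ (ι → E) where
  carrier := Set.range (Function.const ι)
  add_mem' := by
    rintro _ _ ⟨s, rfl⟩ ⟨t, rfl⟩
    exact ⟨s + t, rfl⟩
  zero_mem' := ⟨0, rfl⟩
  smul_mem' := by
    rintro a _ ⟨t, rfl⟩
    exact ⟨a • t, rfl⟩

omit [Fintype ι] in
theorem disjoint_pi_diagonalSubmodule {C : ι → Set E} (hC : ⋂ i, C i = ∅) :
    Disjoint (Set.univ.pi C) (diagonalSubmodule E ι : Set (ι → E)) := by
  rw [Set.disjoint_right]
  rintro _ ⟨t, rfl⟩ ht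
  exact Set.mem_iInter.not.1 (hC ▸ Set.notMem_empty t) fun i => ht i trivial

theorem exists_sum_eq_zero_and_sum_inner_neg [CompleteSpace E] (f : StrongDual ℝ (ι → E))
    {S : Set (ι → E)} {a : ℝ} (hS : ∀ x ∈ S, f x < a)
    (hdiag : ∀ x ∈ diagonalSubmodule E ι, a ≤ f x) :
    ∃ p : ι → E, ∑ i, p i = 0 ∧ ∀ x ∈ S, ∑ i, ⟪p i, x i⟫ < 0 := by
  obtain ⟨p, hp⟩ := exists_forall_eq_sum_inner f
  have ha : a ≤ 0 := (hdiag 0 (zero_mem _)).trans_eq (map_zero f)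
  refine ⟨p, ?_, fun x hx => (hp x).symm.trans_lt ((hS x hx).trans_le ha)⟩
  by_contra hne
  have hpos : 0 < ⟪∑ i, p i, ∑ i, p i⟫ := real_inner_self_pos.2 hne
  have hbelow := hdiag _ ⟨((a - 1) / ⟪∑ i, p i, ∑ i, p i⟫) • ∑ i, p i, rfl⟩
  simp only [hp, Function.const_apply, ← sum_inner] at hbelow
  rw [real_inner_smul_right, div_mul_cancel₀ _ hpos.ne'] at hbelow
  linarith

theorem exists_sum_inner_neg_of_isOpen [CompleteSpace E] {U : ι → Set E}
    (hconv : ∀ i, Convex ℝ (U i)) (hopen : ∀ i, IsOpen (U i)) (hU : ⋂ i, U i = ∅) :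
    ∃ p : ι → E, ∑ i, p i = 0 ∧ ∀ x ∈ Set.univ.pi U, ∑ i, ⟪p i, x i⟫ < 0 := by
  obtain ⟨f, a, hfU, hfdiag⟩ := geometric_hahn_banach_open (convex_pi fun i _ => hconv i)
    (isOpen_set_pi Set.finite_univ fun i _ => hopen i) (diagonalSubmodule E ι).convex
    (disjoint_pi_diagonalSubmodule hU)
  exact exists_sum_eq_zero_and_sum_inner_neg f hfU hfdiag

theorem exists_sum_inner_neg_of_isCompact [FiniteDimensional ℝ E] {C : ι → Set E}
    (hconv : ∀ i, Convex ℝ (C i)) (hcomp : ∀ i, IsCompact (C i)) (hC : ⋂ i, C i = ∅) :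
    ∃ p : ι → E, ∑ i, p i = 0 ∧ ∀ x ∈ Set.univ.pi C, ∑ i, ⟪p i, x i⟫ < 0 := by
  obtain ⟨f, a, b, hfC, hab, hfdiag⟩ := geometric_hahn_banach_compact_closed
    (convex_pi fun i _ => hconv i) (isCompact_univ_pi hcomp) (diagonalSubmodule E ι).convex
    (Submodule.closed_of_finiteDimensional _) (disjoint_pi_diagonalSubmodule hC)
  exact exists_sum_eq_zero_and_sum_inner_neg f hfC fun x hx => hab.le.trans (hfdiag x hx).le

end SeparationFromDiagonal

section Jung

/-- The constant of Jung's theorem: a set of diameter `d` in an `n`-dimensional Euclidean space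
lies in a closed ball of radius `jungConstant n * d`. -/
noncomputable def jungConstant (n : ℕ) : ℝ :=
  √(n / (2 * (n + 1)))

theorem jungConstant_nonneg (n : ℕ) : 0 ≤ jungConstant n :=
  Real.sqrt_nonneg _

theorem jungConstant_sq (n : ℕ) : jungConstant n ^ 2 = n / (2 * (n + 1)) :=
  Real.sq_sqrt (by positivity)

theorem jungConstant_two : jungConstant 2 = 1 / √3 := by
  rw [jungConstant, ← Real.sqrt_one, ← Real.sqrt_div zero_le_one]
  norm_num

variable {E ι : Type*} [NormedAddCommGroup E] [InnerProductSpace ℝ E] [Fintype ι]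

theorem two_mul_sum_mul_norm_sub_sq {w : ι → ℝ} (hw : ∑ i, w i = 1) (x : ι → E) :
    2 * ∑ i, w i * ‖x i - ∑ j, w j • x j‖ ^ 2 = ∑ i, ∑ j, w i * w j * ‖x i - x j‖ ^ 2 := by
  set c := ∑ j, w j • x j with hc
  have hcentered : ∑ i, w i • (x i - c) = 0 := by
    simp_rw [smul_sub, Finset.sum_sub_distrib, ← Finset.sum_smul, hw, one_smul, ← hc, sub_self]
  have hpair (i j : ι) : w i * w j * ‖x i - x j‖ ^ 2 =
      w j * (w i * ‖x i - c‖ ^ 2) + w i * (w j * ‖x j - c‖ ^ 2) -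
        2 * ⟪w i • (x i - c), w j • (x j - c)⟫ := by
    rw [← sub_sub_sub_cancel_right (x i) (x j) c, norm_sub_sq_real, real_inner_smul_left,
      real_inner_smul_right]
    ring
  simp_rw [hpair, Finset.sum_sub_distrib, Finset.sum_add_distrib, ← Finset.mul_sum,
    ← Finset.sum_mul, hw, ← inner_sum, ← sum_inner, hcentered, inner_zero_left,
    one_mul]
  ring

theorem sum_mul_norm_sub_sq_le {n : ℕ} (hcard : Fintype.card ι ≤ n + 1) {w : ι → ℝ}
    (hw : w ∈ stdSimplex ℝ ι) {x : ι → E} {d : ℝ} (hd : ∀ i j, dist (x i) (x j) ≤ d) :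
    ∑ i, w i * ‖x i - ∑ j, w j • x j‖ ^ 2 ≤ n / (2 * (n + 1)) * d ^ 2 := by
  classical
  have hpair (i j : ι) : w i * w j * ‖x i - x j‖ ^ 2 ≤
      w i * w j * d ^ 2 - if i = j then w i ^ 2 * d ^ 2 else 0 := by
    split_ifs with hij
    · simp [hij, sq]
    · have := mul_nonneg (hw.1 i) (hw.1 j)
      rw [sub_zero, ← dist_eq_norm]
      gcongr
      exact hd i j
  have hpairs : 2 * ∑ i, w i * ‖x i - ∑ j, w j • x j‖ ^ 2 ≤ (1 - ∑ i, w i ^ 2) * d ^ 2 := by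
    rw [two_mul_sum_mul_norm_sub_sq hw.2]
    refine (Finset.sum_le_sum fun i _ => Finset.sum_le_sum fun j _ => hpair i j).trans_eq ?_
    simp only [Finset.sum_sub_distrib, ← Finset.sum_mul, ← Finset.mul_sum, hw.2, mul_one,
      Finset.sum_ite_eq, Finset.mem_univ, if_true, sub_mul]
  have hsq : 1 / ((n : ℝ) + 1) ≤ ∑ i, w i ^ 2 := by
    have hcard' : (Fintype.card ι : ℝ) ≤ n + 1 := mod_cast hcard
    rw [div_le_iff₀' (by positivity)]
    calc (1 : ℝ) = (∑ i, w i) ^ 2 := by rw [hw.2, one_pow]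
      _ ≤ Fintype.card ι * ∑ i, w i ^ 2 := sq_sum_le_card_mul_sum_sq
      _ ≤ (n + 1) * ∑ i, w i ^ 2 := by gcongr
  calc ∑ i, w i * ‖x i - ∑ j, w j • x j‖ ^ 2 ≤ (1 - ∑ i, w i ^ 2) * d ^ 2 / 2 := by linarith
    _ ≤ (1 - 1 / ((n : ℝ) + 1)) * d ^ 2 / 2 := by gcongr
    _ = n / (2 * (n + 1)) * d ^ 2 := by rw [one_sub_div (by positivity)]; field_simp; simp

theorem exists_sum_norm_mul_norm_sub_le {n : ℕ} (hcard : Fintype.card ι ≤ n + 1) {x : ι → E}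
    {d : ℝ} (hd0 : 0 ≤ d) (hd : ∀ i j, dist (x i) (x j) ≤ d) (p : ι → E) :
    ∃ c, ∑ i, ‖p i‖ * ‖x i - c‖ ≤ jungConstant n * d * ∑ i, ‖p i‖ := by
  rcases (Finset.sum_nonneg fun i _ => norm_nonneg (p i)).eq_or_lt' with hp | hp
  · have hp' (i : ι) : ‖p i‖ = 0 :=
      (Finset.sum_eq_zero_iff_of_nonneg fun i _ => norm_nonneg (p i)).1 hp i (Finset.mem_univ i)
    exact ⟨0, by simp [hp']⟩
  set w : ι → ℝ := fun i => ‖p i‖ / ∑ j, ‖p j‖ with hw_def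
  have hw : w ∈ stdSimplex ℝ ι :=
    ⟨fun i => by positivity, by rw [← Finset.sum_div, div_self hp.ne']⟩
  refine ⟨∑ j, w j • x j, ?_⟩
  have hmean : ∑ i, w i * ‖x i - ∑ j, w j • x j‖ ≤ jungConstant n * d := by
    refine le_of_sq_le_sq ?_ (mul_nonneg (jungConstant_nonneg n) hd0)
    calc (∑ i, w i * ‖x i - ∑ j, w j • x j‖) ^ 2
        ≤ ∑ i, w i * ‖x i - ∑ j, w j • x j‖ ^ 2 :=
          Real.pow_arith_mean_le_arith_mean_pow _ _ _ (fun i _ => hw.1 i) hw.2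
            (fun i _ => norm_nonneg _) 2
      _ ≤ n / (2 * (n + 1)) * d ^ 2 := sum_mul_norm_sub_sq_le hcard hw hd
      _ = (jungConstant n * d) ^ 2 := by rw [mul_pow, jungConstant_sq]
  calc ∑ i, ‖p i‖ * ‖x i - ∑ j, w j • x j‖
      = (∑ i, w i * ‖x i - ∑ j, w j • x j‖) * ∑ i, ‖p i‖ := by
        rw [Finset.sum_mul]
        exact Finset.sum_congr rfl fun i _ => by simp only [hw_def]; field_simp
    _ ≤ _ := by gcongr

theorem exists_forall_dist_le_jungConstant_mul_of_card_le [FiniteDimensional ℝ E] {n : ℕ}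
    (hcard : Fintype.card ι ≤ n + 1) {x : ι → E} {d : ℝ} (hd0 : 0 ≤ d)
    (hd : ∀ i j, dist (x i) (x j) ≤ d) :
    ∃ c, ∀ i, dist (x i) c ≤ jungConstant n * d := by
  set r := jungConstant n * d
  have hr0 : 0 ≤ r := mul_nonneg (jungConstant_nonneg n) hd0
  -- Separating normals of balls without a common point would contradict the bound on the mean
  -- distance to the center of mass with weights `‖p i‖`.
  by_contra! hfar
  obtain ⟨p, hsum, hneg⟩ := exists_sum_inner_neg_of_isCompact
    (fun i => convex_closedBall (x i) r) (fun i => isCompact_closedBall (x i) r)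
    (Set.eq_empty_of_forall_notMem fun c hc => by
      obtain ⟨i, hi⟩ := hfar c
      exact hi.not_ge (dist_comm c (x i) ▸ Set.mem_iInter.1 hc i))
  obtain ⟨c, hc⟩ := exists_sum_norm_mul_norm_sub_le hcard hd0 hd p
  have hinner (i : ι) : ⟪p i, c⟫ + r * ‖p i‖ - ‖p i‖ * ‖x i - c‖ ≤
      ⟪p i, x i + (r / ‖p i‖) • p i⟫ := by
    have hself : r / ‖p i‖ * ⟪p i, p i⟫ = r * ‖p i‖ := by
      rw [real_inner_self_eq_norm_sq]
      rcases eq_or_ne ‖p i‖ 0 with h | h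
      · simp [h]
      · field_simp
    have hcs := neg_le_of_abs_le (abs_real_inner_le_norm (p i) (x i - c))
    rw [inner_sub_right] at hcs
    rw [inner_add_right, real_inner_smul_right, hself]
    linarith
  have hball : (fun i => x i + (r / ‖p i‖) • p i) ∈
      Set.univ.pi fun i => Metric.closedBall (x i) r := fun i _ => by
    rw [mem_closedBall_iff_norm, add_sub_cancel_left, norm_smul,
      Real.norm_of_nonneg (by positivity)]
    rw [div_mul_comm]
    exact mul_le_of_le_one_left hr0 (div_self_le_one _)
  have hlower := Finset.sum_le_sum fun i (_ : i ∈ Finset.univ) => hinner i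
  rw [Finset.sum_sub_distrib, Finset.sum_add_distrib, ← sum_inner, hsum, inner_zero_left,
    ← Finset.mul_sum] at hlower
  linarith [hneg _ hball]

theorem exists_forall_dist_le_jungConstant_mul [FiniteDimensional ℝ E] {κ : Type*}
    (s : Finset κ) {x : κ → E} {d : ℝ} (hd : ∀ i ∈ s, ∀ j ∈ s, dist (x i) (x j) ≤ d) :
    ∃ c, ∀ i ∈ s, dist (x i) c ≤ jungConstant (Module.finrank ℝ E) * d := by
  rcases s.eq_empty_or_nonempty with rfl | ⟨i₀, hi₀⟩
  · exact ⟨0, by simp⟩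
  have hd0 : 0 ≤ d := dist_nonneg.trans (hd i₀ hi₀ i₀ hi₀)
  obtain ⟨c, hc⟩ := Convex.helly_theorem' (𝕜 := ℝ) (s := s)
    (fun i _ => convex_closedBall (x i) (jungConstant (Module.finrank ℝ E) * d))
    fun I hI hcard => by
      obtain ⟨c, hc⟩ := exists_forall_dist_le_jungConstant_mul_of_card_le (ι := I)
        (by simpa using hcard) (x := fun i => x i) hd0 fun i j => hd i (hI i.2) j (hI j.2)
      exact ⟨c, Set.mem_iInter₂.2 fun i hi => Metric.mem_closedBall'.2 (hc ⟨i, hi⟩)⟩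
  exact ⟨c, fun i hi => Metric.mem_closedBall'.1 (Set.mem_iInter₂.1 hc i hi)⟩

end Jung

section SupportFunction

variable {n : ℕ} {S T : Set (EuclideanSpace ℝ (Fin n))} {u v x : EuclideanSpace ℝ (Fin n)}

theorem bddAbove_inner_image (hS : Bornology.IsBounded S)
    (v : EuclideanSpace ℝ (Fin n)) : BddAbove ((fun p => ⟪p, v⟫) '' S) := by
  obtain ⟨R, hR⟩ := hS.exists_norm_le
  refine ⟨R * ‖v‖, ?_⟩
  rintro _ ⟨p, hp, rfl⟩
  exact (real_inner_le_norm p v).trans (by gcongr; exact hR p hp)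

theorem inner_le_suppNorm (hS : Bornology.IsBounded S) (hx : x ∈ S)
    (v : EuclideanSpace ℝ (Fin n)) : ⟪x, v⟫ ≤ suppNorm S v :=
  le_csSup (bddAbove_inner_image hS v) ⟨x, hx, rfl⟩

theorem suppNorm_zero (hS : S.Nonempty) : suppNorm S 0 = 0 := by
  simp [suppNorm, hS]

theorem inner_lt_suppNorm_of_mem_interior (hS : Bornology.IsBounded S) (hx : x ∈ interior S)
    (hv : v ≠ 0) : ⟪x, v⟫ < suppNorm S v := by
  have hopen : IsOpenMap fun p => ⟪p, v⟫ := by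
    rw [show (fun p => ⟪p, v⟫) = innerSL ℝ v from funext fun p => real_inner_comm v p]
    exact (innerSL ℝ v).isOpenMap_of_ne_zero fun h => hv (innerSL_inj.1 (h.trans (map_zero _).symm))
  have hsub : (fun p => ⟪p, v⟫) '' interior S ⊆ Set.Iio (suppNorm S v) := by
    rw [← interior_Iic]
    refine interior_maximal ?_ (hopen _ isOpen_interior)
    rintro _ ⟨p, hp, rfl⟩
    exact inner_le_suppNorm hS (interior_subset hp) v
  exact hsub ⟨x, hx, rfl⟩

theorem exists_mem_inner_eq_suppNorm (hS : IsCompact S) (hne : S.Nonempty)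
    (v : EuclideanSpace ℝ (Fin n)) : ∃ x ∈ S, ⟪x, v⟫ = suppNorm S v :=
  (hS.image (by fun_prop)).sSup_mem (hne.image fun p => ⟪p, v⟫)

theorem suppNorm_sub (hS : Bornology.IsBounded S) (hS' : S.Nonempty)
    (hT : Bornology.IsBounded T) (hT' : T.Nonempty) (v : EuclideanSpace ℝ (Fin n)) :
    suppNorm (S - T) v = suppNorm S v + suppNorm T (-v) := by
  have himage : (fun p => ⟪p, v⟫) '' (S - T) =
      (fun p => ⟪p, v⟫) '' S + (fun p => ⟪p, -v⟫) '' T := by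
    rw [← Set.image2_sub, ← Set.image2_add]
    simp only [Set.image_image2, Set.image2_image_left, Set.image2_image_right, inner_sub_left,
      inner_neg_right, ← sub_eq_add_neg]
  rw [suppNorm, himage, csSup_add (hS'.image _) (bddAbove_inner_image hS v)
    (hT'.image _) (bddAbove_inner_image hT (-v))]
  rfl

theorem suppNorm_sum_le {ι : Type*} (hS : Bornology.IsBounded S) (hne : S.Nonempty)
    (s : Finset ι) (p : ι → EuclideanSpace ℝ (Fin n)) :
    suppNorm S (∑ i ∈ s, p i) ≤ ∑ i ∈ s, suppNorm S (p i) := by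
  refine csSup_le (hne.image _) ?_
  rintro _ ⟨x, hx, rfl⟩
  simp only [inner_sum]
  exact Finset.sum_le_sum fun i _ => inner_le_suppNorm hS hx (p i)

theorem suppNorm_sum_add_suppNorm_neg_sum_le {ι : Type*}
    (hS : Bornology.IsBounded S) (hne : S.Nonempty) {s t : Finset ι} (hst : s ⊆ t)
    {p : ι → EuclideanSpace ℝ (Fin n)} (hp : ∑ i ∈ t, p i = 0) :
    suppNorm S (∑ i ∈ s, p i) + suppNorm S (-∑ i ∈ s, p i) ≤ ∑ i ∈ t, suppNorm S (p i) := by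
  classical
  have hcompl : -∑ i ∈ s, p i = ∑ i ∈ t \ s, p i := by
    rw [neg_eq_iff_add_eq_zero, add_comm, Finset.sum_sdiff hst, hp]
  rw [hcompl, ← Finset.sum_sdiff hst, add_comm]
  gcongr <;> exact suppNorm_sum_le hS hne _ p

theorem ball_subset_of_mul_norm_le_suppNorm (hconv : Convex ℝ S) (hclosed : IsClosed S)
    (hne : S.Nonempty) {r : ℝ} (hr : ∀ v, r * ‖v‖ ≤ suppNorm S v) : Metric.ball 0 r ⊆ S := by
  intro x hx
  by_contra hxS
  obtain ⟨f, a, hfS, hfx⟩ := geometric_hahn_banach_closed_point hconv hclosed hxS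
  obtain ⟨v, rfl⟩ := (InnerProductSpace.toDual ℝ _).surjective f
  simp only [InnerProductSpace.toDual_apply_apply] at hfS hfx
  have hsupp : suppNorm S v ≤ a := by
    refine csSup_le (hne.image _) ?_
    rintro _ ⟨p, hp, rfl⟩
    exact (real_inner_comm v p ▸ hfS p hp).le
  have hnorm : ⟪v, x⟫ ≤ r * ‖v‖ := by
    rw [mul_comm]
    exact (real_inner_le_norm v x).trans (by gcongr; exact (mem_ball_zero_iff.1 hx).le)
  linarith [hr v]

end SupportFunction

section ClosedPolygon

variable {E : Type*} [NormedAddCommGroup E]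

/-- The length of the closed polygonal line with vertices `q 0, …, q (m - 1)`. The values of `q`
at larger indices are irrelevant. -/
def closedLength (m : ℕ) (q : ℕ → E) : ℝ :=
  ∑ i ∈ Finset.range m, ‖q ((i + 1) % m) - q i‖

theorem closedLength_nonneg (m : ℕ) (q : ℕ → E) : 0 ≤ closedLength m q :=
  Finset.sum_nonneg fun _ _ => norm_nonneg _

theorem sum_range_succ_mod {M : Type*} [AddCommMonoid M] (m : ℕ) (f : ℕ → M) :
    ∑ i ∈ Finset.range m, f ((i + 1) % m) = ∑ i ∈ Finset.range m, f i := by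
  cases m with
  | zero => simp
  | succ k =>
    rw [Finset.sum_range_succ, Finset.sum_range_succ', Nat.mod_self]
    congr 1
    refine Finset.sum_congr rfl fun i hi => ?_
    rw [Nat.mod_eq_of_lt (by simpa using hi)]

theorem sum_inner_le_mul_closedLength [InnerProductSpace ℝ E] {m : ℕ} {P : ℕ → E}
    (hP : P m = P 0) (q : ℕ → E) {c : E} {r : ℝ}
    (hr : ∀ i ∈ Finset.range m, dist (P (i + 1)) c ≤ r) :
    ∑ i ∈ Finset.range m, ⟪P (i + 1) - P i, q i⟫ ≤ r * closedLength m q := by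
  have hparts : ∑ i ∈ Finset.range m, ⟪P (i + 1) - P i, q i⟫ =
      ∑ i ∈ Finset.range m, ⟪P (i + 1) - c, q i - q ((i + 1) % m)⟫ := by
    rw [← sub_eq_zero, ← Finset.sum_sub_distrib]
    have hperiodic (i : ℕ) (hi : i ∈ Finset.range m) : P ((i + 1) % m) = P (i + 1) := by
      rcases eq_or_lt_of_le (Nat.add_one_le_of_lt (Finset.mem_range.1 hi)) with h | h
      · rw [h, Nat.mod_self, hP]
      · rw [Nat.mod_eq_of_lt h]
    calc _ = ∑ i ∈ Finset.range m,
          (⟪P ((i + 1) % m) - c, q ((i + 1) % m)⟫ - ⟪P i - c, q i⟫) := by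
          refine Finset.sum_congr rfl fun i hi => ?_
          rw [hperiodic i hi, inner_sub_right, ← sub_sub_sub_cancel_right _ _ c, inner_sub_left]
          ring
      _ = 0 := by
          rw [Finset.sum_sub_distrib, sum_range_succ_mod m fun i => ⟪P i - c, q i⟫, sub_self]
  rw [hparts, closedLength, Finset.mul_sum]
  refine Finset.sum_le_sum fun i hi => (real_inner_le_norm _ _).trans ?_
  rw [norm_sub_rev (q i), ← dist_eq_norm]
  gcongr
  exact hr i hi

theorem sum_inner_le_of_dist_sum_le [InnerProductSpace ℝ E] [FiniteDimensional ℝ E] {m : ℕ}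
    {p : ℕ → E} (hp : ∑ i ∈ Finset.range m, p i = 0) {d : ℝ}
    (hd : ∀ i ≤ m, ∀ j ≤ m,
      dist (∑ k ∈ Finset.range i, p k) (∑ k ∈ Finset.range j, p k) ≤ d) (q : ℕ → E) :
    ∑ i ∈ Finset.range m, ⟪p i, q i⟫ ≤
      jungConstant (Module.finrank ℝ E) * d * closedLength m q := by
  obtain ⟨c, hc⟩ := exists_forall_dist_le_jungConstant_mul (Finset.range (m + 1))
    (x := fun i => ∑ k ∈ Finset.range i, p k) fun i hi j hj =>
      hd i (Finset.mem_range_succ_iff.1 hi) j (Finset.mem_range_succ_iff.1 hj)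
  simpa only [Finset.sum_range_succ_sub_sum] using
    sum_inner_le_mul_closedLength (P := fun i => ∑ k ∈ Finset.range i, p k) (by simp [hp]) q
      fun i hi => hc (i + 1) (Finset.mem_range.2 (Nat.succ_lt_succ (Finset.mem_range.1 hi)))

end ClosedPolygon

section ShortestPolygon

variable {n : ℕ} {S K : Set (EuclideanSpace ℝ (Fin n))}

theorem xiB_nonneg (S : Set (EuclideanSpace ℝ (Fin n))) : 0 ≤ xiB S :=
  Real.sInf_nonneg <| by
    rintro _ ⟨m, _, q, _, rfl⟩
    exact closedLength_nonneg m q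

theorem xiB_le_closedLength {m : ℕ} (hm : 2 ≤ m) {q : ℕ → EuclideanSpace ℝ (Fin n)}
    (hq : NotTranslatableInto m q S) : xiB S ≤ closedLength m q := by
  refine csInf_le ⟨0, ?_⟩ ⟨m, hm, q, hq, rfl⟩
  rintro _ ⟨m, _, q, _, rfl⟩
  exact closedLength_nonneg m q

theorem exists_notTranslatableInto_two (hS : Bornology.IsBounded S)
    {v : EuclideanSpace ℝ (Fin n)} (hv : v ≠ 0) :
    ∃ q, NotTranslatableInto 2 q S ∧
      closedLength 2 q * ‖v‖ = 2 * |suppNorm S v + suppNorm S (-v)| := by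
  have hv' : ‖v‖ ≠ 0 := norm_ne_zero_iff.2 hv
  set w := suppNorm S v + suppNorm S (-v)
  let q : ℕ → EuclideanSpace ℝ (Fin n) := fun i => if i = 0 then 0 else (w / ‖v‖ ^ 2) • v
  refine ⟨q, fun t => ?_, ?_⟩
  · by_contra! hin
    have h₀ := inner_lt_suppNorm_of_mem_interior hS (hin 0 two_pos) (neg_ne_zero.2 hv)
    have h₁ := inner_lt_suppNorm_of_mem_interior hS (hin 1 one_lt_two) hv
    have hinner : ⟪(w / ‖v‖ ^ 2) • v, v⟫ = w := by
      rw [real_inner_smul_left, real_inner_self_eq_norm_sq]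
      field_simp
    simp only [q, if_true, one_ne_zero, if_false, zero_add, inner_neg_right, inner_add_left,
      hinner] at h₀ h₁
    linarith
  · have hlength : closedLength 2 q = 2 * ‖(w / ‖v‖ ^ 2) • v‖ := by
      simp [closedLength, q, Finset.sum_range_succ, two_mul]
    have hnorm : ‖(w / ‖v‖ ^ 2) • v‖ * ‖v‖ = |w| := by
      rw [norm_smul, norm_div, norm_pow, norm_norm, Real.norm_eq_abs]
      field_simp
    rw [hlength, mul_assoc, hnorm]

theorem le_xiB [NeZero n] (hS : Bornology.IsBounded S) {a : ℝ}
    (ha : ∀ m, 2 ≤ m → ∀ q, NotTranslatableInto m q S → a ≤ closedLength m q) : a ≤ xiB S := by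
  obtain ⟨v, hv⟩ := exists_ne (0 : EuclideanSpace ℝ (Fin n))
  obtain ⟨q, hq, -⟩ := exists_notTranslatableInto_two hS hv
  refine le_csInf ⟨_, 2, le_rfl, q, hq, rfl⟩ ?_
  rintro _ ⟨m, hm, q, hq, rfl⟩
  exact ha m hm q hq

theorem xiB_mul_norm_le (hS : Bornology.IsBounded S) (hne : S.Nonempty)
    (v : EuclideanSpace ℝ (Fin n)) : xiB S * ‖v‖ ≤ 2 * (suppNorm S v + suppNorm S (-v)) := by
  rcases eq_or_ne v 0 with rfl | hv
  · simp [suppNorm_zero hne]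
  have hbreadth : 0 ≤ suppNorm S v + suppNorm S (-v) := by
    obtain ⟨x, hx⟩ := hne
    have h₁ := inner_le_suppNorm hS hx v
    have h₂ := inner_le_suppNorm hS hx (-v)
    rw [inner_neg_right] at h₂
    linarith
  obtain ⟨q, hq, hlength⟩ := exists_notTranslatableInto_two hS hv
  rw [← abs_of_nonneg hbreadth, ← hlength]
  gcongr
  exact xiB_le_closedLength le_rfl hq

theorem xiB_sub_self_mul_norm_le (hS : Bornology.IsBounded S) (hne : S.Nonempty)
    (v : EuclideanSpace ℝ (Fin n)) :
    xiB (S - S) * ‖v‖ ≤ 4 * (suppNorm S v + suppNorm S (-v)) := by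
  refine (xiB_mul_norm_le (hS.sub hS) (hne.sub hne) v).trans_eq ?_
  rw [suppNorm_sub hS hne hS hne, suppNorm_sub hS hne hS hne, neg_neg]
  ring

end ShortestPolygon

section UpperBound

variable {n m : ℕ} {K : Set (EuclideanSpace ℝ (Fin n))} {q : ℕ → EuclideanSpace ℝ (Fin n)}

theorem exists_sum_suppNorm_le_of_fin (hK : IsConvexBody K) (hq : NotTranslatableInto m q K) :
    ∃ p : Fin m → EuclideanSpace ℝ (Fin n), p ≠ 0 ∧ ∑ i, p i = 0 ∧
      ∑ i, suppNorm K (p i) ≤ ∑ i, ⟪p i, q i⟫ := by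
  obtain ⟨hcomp, hconv, hint⟩ := hK
  obtain ⟨p, hsum, hneg⟩ := exists_sum_inner_neg_of_isOpen
    (fun i : Fin m => hconv.interior.translate_preimage_right (q i))
    (fun i => isOpen_interior.preimage (continuous_const_add (q i)))
    (Set.eq_empty_of_forall_notMem fun t ht => by
      obtain ⟨i, hi, hit⟩ := hq t
      exact hit (Set.mem_iInter.1 ht ⟨i, hi⟩))
  have hlt (x : Fin m → EuclideanSpace ℝ (Fin n)) (hx : x ∈ Set.univ.pi fun _ => interior K) :
      ∑ i, ⟪p i, x i⟫ < ∑ i, ⟪p i, q i⟫ := by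
    rw [← sub_neg, ← Finset.sum_sub_distrib]
    simp_rw [← inner_sub_right]
    exact hneg (fun i => x i - q i) fun i _ => by simpa using hx i trivial
  have hle (x : Fin m → EuclideanSpace ℝ (Fin n)) (hx : x ∈ Set.univ.pi fun _ => K) :
      ∑ i, ⟪p i, x i⟫ ≤ ∑ i, ⟪p i, q i⟫ := by
    have hclosed : IsClosed {x : Fin m → EuclideanSpace ℝ (Fin n) |
        ∑ i, ⟪p i, x i⟫ ≤ ∑ i, ⟪p i, q i⟫} := isClosed_le (by fun_prop) continuous_const
    refine closure_minimal (fun x hx => (hlt x hx).le) hclosed ?_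
    rw [closure_pi_set, hconv.closure_interior_eq_closure_of_nonempty_interior hint,
      hcomp.isClosed.closure_eq]
    exact hx
  refine ⟨p, ?_, hsum, ?_⟩
  · rintro rfl
    obtain ⟨x, hx⟩ := hint
    simpa using hlt (fun _ => x) fun _ _ => hx
  · choose x hxK hx using fun i =>
      exists_mem_inner_eq_suppNorm hcomp (hint.mono interior_subset) (p i)
    simp_rw [← hx, real_inner_comm (p _)]
    exact hle x fun i _ => hxK i

theorem exists_sum_suppNorm_le (hK : IsConvexBody K) (hq : NotTranslatableInto m q K) :
    ∃ p : ℕ → EuclideanSpace ℝ (Fin n), (∃ i < m, p i ≠ 0) ∧ ∑ i ∈ Finset.range m, p i = 0 ∧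
      ∑ i ∈ Finset.range m, suppNorm K (p i) ≤ ∑ i ∈ Finset.range m, ⟪p i, q i⟫ := by
  obtain ⟨p, hp, hsum, hle⟩ := exists_sum_suppNorm_le_of_fin hK hq
  obtain ⟨i, hi⟩ := Function.ne_iff.1 hp
  refine ⟨Function.extend Fin.val p 0, ⟨i, i.2, ?_⟩, ?_⟩
  · rwa [Fin.val_injective.extend_apply]
  · simpa only [Finset.sum_range, Fin.val_injective.extend_apply] using ⟨hsum, hle⟩

theorem xiB_sub_self_mul_dist_sum_le (hK : Bornology.IsBounded K) (hne : K.Nonempty)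
    {p : ℕ → EuclideanSpace ℝ (Fin n)} (hp : ∑ k ∈ Finset.range m, p k = 0) {i j : ℕ}
    (hi : i ≤ m) (hj : j ≤ m) :
    xiB (K - K) * dist (∑ k ∈ Finset.range i, p k) (∑ k ∈ Finset.range j, p k) ≤
      4 * ∑ k ∈ Finset.range m, suppNorm K (p k) := by
  wlog hij : j ≤ i generalizing i j
  · rw [dist_comm]
    exact this hj hi (le_of_not_ge hij)
  rw [dist_eq_norm, ← Finset.sum_Ico_eq_sub _ hij]
  refine (xiB_sub_self_mul_norm_le hK hne _).trans ?_
  gcongr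
  refine suppNorm_sum_add_suppNorm_neg_sum_le hK hne (fun k hk => ?_) hp
  exact Finset.mem_range.2 ((Finset.mem_Ico.1 hk).2.trans_le hi)

theorem sum_suppNorm_pos (hK : IsConvexBody K) {p : ℕ → EuclideanSpace ℝ (Fin n)}
    (hp : ∃ i < m, p i ≠ 0) (hsum : ∑ i ∈ Finset.range m, p i = 0) :
    0 < ∑ i ∈ Finset.range m, suppNorm K (p i) := by
  obtain ⟨hcomp, -, x, hx⟩ := hK
  obtain ⟨i, hi, hpi⟩ := hp
  calc 0 = ∑ i ∈ Finset.range m, ⟪x, p i⟫ := by rw [← inner_sum, hsum, inner_zero_right]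
    _ < _ := Finset.sum_lt_sum
      (fun i _ => inner_le_suppNorm hcomp.isBounded (interior_subset hx) (p i))
      ⟨i, Finset.mem_range.2 hi, inner_lt_suppNorm_of_mem_interior hcomp.isBounded hx hpi⟩

theorem xiB_sub_self_le_closedLength (hK : IsConvexBody K) (hq : NotTranslatableInto m q K) :
    xiB (K - K) ≤ 4 * jungConstant n * closedLength m q := by
  rcases (xiB_nonneg (K - K)).eq_or_lt' with hxi | hxi
  · rw [hxi]
    exact mul_nonneg (mul_nonneg four_pos.le (jungConstant_nonneg n)) (closedLength_nonneg m q)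
  obtain ⟨p, hp, hsum, hle⟩ := exists_sum_suppNorm_le hK hq
  set H := ∑ i ∈ Finset.range m, suppNorm K (p i)
  have hH : 0 < H := sum_suppNorm_pos hK hp hsum
  have hdist (i) (hi : i ≤ m) (j) (hj : j ≤ m) :
      dist (∑ k ∈ Finset.range i, p k) (∑ k ∈ Finset.range j, p k) ≤ 4 * H / xiB (K - K) :=
    (le_div_iff₀' hxi).2 <| xiB_sub_self_mul_dist_sum_le hK.1.isBounded
      (hK.2.2.mono interior_subset) hsum hi hj
  have hbound : H ≤ jungConstant n * (4 * H / xiB (K - K)) * closedLength m q := by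
    simpa only [finrank_euclideanSpace_fin] using
      hle.trans (sum_inner_le_of_dist_sum_le hsum hdist q)
  refine le_of_mul_le_mul_right ?_ hH
  calc xiB (K - K) * H
      ≤ xiB (K - K) * (jungConstant n * (4 * H / xiB (K - K)) * closedLength m q) := by gcongr
    _ = 4 * jungConstant n * closedLength m q * H := by field_simp

theorem xiB_sub_self_le [NeZero n] (hK : IsConvexBody K) :
    xiB (K - K) ≤ 4 * jungConstant n * xiB K := by
  have hJ : 0 < 4 * jungConstant n :=
    mul_pos four_pos (Real.sqrt_pos.2 (by have := NeZero.pos n; positivity))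
  rw [← div_le_iff₀' hJ]
  exact le_xiB hK.1.isBounded fun m _ q hq =>
    (div_le_iff₀' hJ).2 (xiB_sub_self_le_closedLength hK hq)

end UpperBound

section LowerBound

variable {E : Type*} [NormedAddCommGroup E] [NormedSpace ℝ E]

theorem exists_point_at_arclength (a : ℕ → E) (m : ℕ) {σ : ℝ}
    (hσ : σ ∈ Set.Icc 0 (∑ k ∈ Finset.range m, dist (a k) (a (k + 1)))) :
    ∃ y, ∀ i ≤ m, dist (a i) y ≤ |∑ k ∈ Finset.range i, dist (a k) (a (k + 1)) - σ| := by
  induction m with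
  | zero =>
    refine ⟨a 0, fun i hi => ?_⟩
    rw [Nat.le_zero.1 hi, dist_self]
    exact abs_nonneg _
  | succ m ih =>
    rw [Finset.sum_range_succ] at hσ
    rcases le_or_gt σ (∑ k ∈ Finset.range m, dist (a k) (a (k + 1))) with hm | hm
    · obtain ⟨y, hy⟩ := ih ⟨hσ.1, hm⟩
      refine ⟨y, fun i hi => ?_⟩
      rcases Nat.le_add_one_iff.1 hi with hi | rfl
      · exact hy i hi
      have hym := hy m le_rfl
      rw [abs_of_nonneg (sub_nonneg.2 hm)] at hym
      rw [Finset.sum_range_succ]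
      refine (dist_triangle_left _ _ (a m)).trans (le_trans ?_ (le_abs_self _))
      linarith
    · obtain ⟨y, hmy, hy⟩ := exists_dist_le_le (x := a m) (z := a (m + 1))
        (sub_nonneg.2 hm.le) (sub_nonneg.2 hσ.2) (by linarith)
      refine ⟨y, fun i hi => ?_⟩
      rcases Nat.le_add_one_iff.1 hi with hi | rfl
      · have him := dist_le_Ico_sum_dist a hi
        rw [Finset.sum_Ico_eq_sub _ hi] at him
        refine (dist_triangle _ (a m) _).trans (le_trans ?_ (neg_le_abs _))
        linarith
      · rw [dist_comm, Finset.sum_range_succ]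
        refine le_trans ?_ (le_abs_self _)
        linarith

theorem exists_forall_dist_le_sum_dist_div_four {a : ℕ → E} {m : ℕ} (ha : a m = a 0) :
    ∃ c, ∀ i ≤ m, dist (a i) c ≤ (∑ k ∈ Finset.range m, dist (a k) (a (k + 1))) / 4 := by
  set L := ∑ k ∈ Finset.range m, dist (a k) (a (k + 1))
  have hL : 0 ≤ L := Finset.sum_nonneg fun _ _ => dist_nonneg
  obtain ⟨y, hy⟩ := exists_point_at_arclength a m (σ := L / 2) ⟨by linarith, by linarith⟩
  refine ⟨midpoint ℝ (a 0) y, fun i hi => ?_⟩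
  have hforward := dist_le_range_sum_dist a i
  have hbackward := dist_le_Ico_sum_dist a hi
  rw [Finset.sum_Ico_eq_sub _ hi, ha] at hbackward
  have hmid := dist_midpoint_midpoint_le (a i) (a i) (a 0) y
  rw [midpoint_self] at hmid
  have hhalf := hy i hi
  rw [dist_comm (a 0)] at hforward
  rcases abs_cases (∑ k ∈ Finset.range i, dist (a k) (a (k + 1)) - L / 2) with h | h <;>
    linarith

theorem exists_forall_dist_le_closedLength_div_four (m : ℕ) (q : ℕ → E) :
    ∃ c, ∀ i < m, dist (q i) c ≤ closedLength m q / 4 := by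
  obtain ⟨c, hc⟩ := exists_forall_dist_le_sum_dist_div_four
    (a := fun i => q (i % m)) (m := m) (by simp)
  refine ⟨c, fun i hi => ?_⟩
  have hlength : closedLength m q =
      ∑ k ∈ Finset.range m, dist (q (k % m)) (q ((k + 1) % m)) :=
    Finset.sum_congr rfl fun k hk => by
      rw [Nat.mod_eq_of_lt (Finset.mem_range.1 hk), dist_eq_norm']
  simpa only [hlength, Nat.mod_eq_of_lt hi] using hc i hi.le

theorem four_mul_le_xiB_of_ball_subset {n : ℕ} [NeZero n] {S : Set (EuclideanSpace ℝ (Fin n))}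
    (hS : Bornology.IsBounded S) {x : EuclideanSpace ℝ (Fin n)} {r : ℝ}
    (hball : Metric.ball x r ⊆ S) : 4 * r ≤ xiB S := by
  refine le_xiB hS fun m _ q hq => ?_
  by_contra! hshort
  obtain ⟨c, hc⟩ := exists_forall_dist_le_closedLength_div_four m q
  obtain ⟨i, hi, hout⟩ := hq (x - c)
  refine hout (interior_maximal hball Metric.isOpen_ball ?_)
  rw [mem_ball_iff_norm, add_sub_left_comm, add_sub_cancel_left, ← dist_eq_norm]
  linarith [hc i hi]

end LowerBound

section Triangle

theorem notTranslatableInto_convexHull_of_coord_nonpos {n m : ℕ}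
    (b : AffineBasis (Fin m) ℝ (EuclideanSpace ℝ (Fin n))) {q : ℕ → EuclideanSpace ℝ (Fin n)}
    (hq : ∀ i : Fin m, b.coord i (q i) ≤ 0) :
    NotTranslatableInto m q (convexHull ℝ (Set.range b)) := by
  intro t
  by_contra! hin
  rw [b.interior_convexHull] at hin
  have hlinear : ∑ i, (b.coord i).linear t = 0 := by
    have hshift (i : Fin m) : (b.coord i).linear t = b.coord i (t + 0) - b.coord i 0 := by
      rw [← vadd_eq_add, AffineMap.map_vadd, vadd_eq_add, add_sub_cancel_right]
    simp_rw [hshift, Finset.sum_sub_distrib, b.sum_coord_apply_eq_one, sub_self]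
  have hpos (i : Fin m) : 0 < (b.coord i).linear t := by
    have hi := hin i i.2 i
    rw [add_comm, ← vadd_eq_add, AffineMap.map_vadd, vadd_eq_add] at hi
    linarith [hq i]
  have hm : Nonempty (Fin m) := b.nonempty
  exact (Finset.sum_pos (fun i _ => hpos i) Finset.univ_nonempty).ne' hlinear

theorem dist_midpoint_midpoint_le_of_common {E : Type*} [NormedAddCommGroup E]
    [NormedSpace ℝ E] (x y z : E) :
    dist (midpoint ℝ x y) (midpoint ℝ y z) ≤ dist x z / 2 := by
  simpa [midpoint_comm] using dist_midpoint_midpoint_le x y z y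

theorem xiB_convexHull_triangle_le {n : ℕ}
    (b : AffineBasis (Fin 3) ℝ (EuclideanSpace ℝ (Fin n))) :
    xiB (convexHull ℝ (Set.range b)) ≤
      (dist (b 0) (b 1) + dist (b 1) (b 2) + dist (b 2) (b 0)) / 2 := by
  let q : ℕ → EuclideanSpace ℝ (Fin n) := fun i =>
    midpoint ℝ (b (Fin.ofNat 3 i + 1)) (b (Fin.ofNat 3 i + 2))
  have hq (i : Fin 3) : b.coord i (q i) ≤ 0 := by
    have h₁ : i ≠ i + 1 := by lia
    have h₂ : i ≠ i + 2 := by lia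
    simp [q, b.coord_apply_ne h₁, b.coord_apply_ne h₂]
  refine (xiB_le_closedLength (by norm_num)
    (notTranslatableInto_convexHull_of_coord_nonpos b hq)).trans ?_
  have h₀ := dist_midpoint_midpoint_le_of_common (b 1) (b 2) (b 0)
  have h₁ := dist_midpoint_midpoint_le_of_common (b 2) (b 0) (b 1)
  have h₂ := dist_midpoint_midpoint_le_of_common (b 0) (b 1) (b 2)
  have hlength : closedLength 3 q = dist (midpoint ℝ (b 1) (b 2)) (midpoint ℝ (b 2) (b 0)) +
      dist (midpoint ℝ (b 2) (b 0)) (midpoint ℝ (b 0) (b 1)) +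
      dist (midpoint ℝ (b 0) (b 1)) (midpoint ℝ (b 1) (b 2)) := by
    simp only [closedLength, Finset.sum_range_succ, Finset.sum_range_zero, zero_add, q,
      ← dist_eq_norm']
    rfl
  rw [hlength, dist_comm (b 0) (b 1), dist_comm (b 1) (b 2), dist_comm (b 2) (b 0)]
  linarith

theorem not_collinear_of_dist_eq {E : Type*} [NormedAddCommGroup E] [NormedSpace ℝ E]
    {A B C : E} (hpos : 0 < dist A B) (hAB : dist A B = dist B C) (hBC : dist B C = dist C A) :
    ¬Collinear ℝ {A, B, C} := by
  intro h
  rcases h.wbtw_or_wbtw_or_wbtw with h | h | h <;>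
    linarith [h.dist_add_dist, dist_comm A B, dist_comm B C, dist_comm C A]

theorem exists_affineBasis_coe_eq {E : Type*} [NormedAddCommGroup E] [NormedSpace ℝ E]
    (hE : Module.finrank ℝ E = 2) {A B C : E} (h : ¬Collinear ℝ {A, B, C}) :
    ∃ b : AffineBasis (Fin 3) ℝ E, ⇑b = ![A, B, C] := by
  have : FiniteDimensional ℝ E := Module.finite_of_finrank_pos (by lia)
  have hindep := affineIndependent_iff_not_collinear_set.2 h
  exact ⟨⟨![A, B, C], hindep,
    hindep.affineSpan_eq_top_iff_card_eq_finrank_add_one.2 (by simp [hE])⟩, rfl⟩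

end Triangle

section EquilateralTriangle

theorem norm_sq_mul_gram (u v w : EuclideanSpace ℝ (Fin 2)) :
    ‖u‖ ^ 2 * (‖v‖ ^ 2 * ‖w‖ ^ 2 - ⟪v, w⟫ ^ 2) =
      ‖w‖ ^ 2 * ⟪v, u⟫ ^ 2 - 2 * ⟪v, w⟫ * ⟪v, u⟫ * ⟪w, u⟫ + ‖v‖ ^ 2 * ⟪w, u⟫ ^ 2 := by
  simp only [EuclideanSpace.real_norm_sq_eq, PiLp.inner_apply, Fin.sum_univ_two,
    RCLike.inner_apply, conj_trivial]
  ring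

theorem sum_sq_inner_edge {A B C : EuclideanSpace ℝ (Fin 2)} (hpos : 0 < dist A B)
    (hAB : dist A B = dist B C) (hBC : dist B C = dist C A) (u : EuclideanSpace ℝ (Fin 2)) :
    ⟪B - A, u⟫ ^ 2 + ⟪C - B, u⟫ ^ 2 + ⟪A - C, u⟫ ^ 2 = 3 / 2 * (dist A B) ^ 2 * ‖u‖ ^ 2 := by
  have hv : ‖B - A‖ = dist A B := (dist_eq_norm' A B).symm
  have hw : ‖C - B‖ = dist A B := by rw [hAB, dist_eq_norm']
  have hclose : A - C = -((B - A) + (C - B)) := by abel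
  have hvw : ⟪B - A, C - B⟫ = -(dist A B) ^ 2 / 2 := by
    have h := norm_add_sq_real (B - A) (C - B)
    rw [← norm_neg, ← hclose, ← dist_eq_norm', ← hBC, ← hAB, hv, hw] at h
    linarith
  have hgram := norm_sq_mul_gram u (B - A) (C - B)
  rw [hv, hw, hvw] at hgram
  rw [hclose, inner_neg_left, inner_add_left]
  refine mul_left_cancel₀ (pow_ne_zero 2 hpos.ne') ?_
  linear_combination -2 * hgram

theorem sum_sq_le_two_mul_sq {a b c h : ℝ} (hsum : a + b + c = 0) (ha : |a| ≤ h) (hb : |b| ≤ h)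
    (hc : |c| ≤ h) : a ^ 2 + b ^ 2 + c ^ 2 ≤ 2 * h ^ 2 := by
  -- The product of the three products below is the square `(a * b * c) ^ 2`.
  have hsign : 0 ≤ a * b ∨ 0 ≤ b * c ∨ 0 ≤ c * a := by
    by_contra! hneg
    nlinarith [mul_pos_of_neg_of_neg hneg.1 hneg.2.1, sq_nonneg b]
  have ha' := sq_le_sq' (neg_le_of_abs_le ha) (le_of_abs_le ha)
  have hb' := sq_le_sq' (neg_le_of_abs_le hb) (le_of_abs_le hb)
  have hc' := sq_le_sq' (neg_le_of_abs_le hc) (le_of_abs_le hc)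
  obtain rfl : c = -(a + b) := by linarith
  rcases hsign with h | h | h <;> linarith

theorem ball_subset_convexHull_sub_self {A B C : EuclideanSpace ℝ (Fin 2)}
    (hpos : 0 < dist A B) (hAB : dist A B = dist B C) (hBC : dist B C = dist C A) :
    Metric.ball 0 (√3 / 2 * dist A B) ⊆
      convexHull ℝ {A, B, C} - convexHull ℝ {A, B, C} := by
  set T := convexHull ℝ {A, B, C}
  have hconv : Convex ℝ T := convex_convexHull ℝ _
  have hcomp : IsCompact T := (Set.toFinite _).isCompact_convexHull ℝ
  have hbdd : Bornology.IsBounded (T - T) := hcomp.isBounded.sub hcomp.isBounded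
  have hclosed : IsClosed (T - T) := by
    rw [sub_eq_add_neg]
    exact (hcomp.add hcomp.neg).isClosed
  have hmem : {A, B, C} ⊆ T := subset_convexHull ℝ _
  have hne : T.Nonempty := ⟨A, hmem (by simp)⟩
  refine ball_subset_of_mul_norm_le_suppNorm (hconv.sub hconv) hclosed (hne.sub hne) fun u => ?_
  have hedge {y z} (hy : y ∈ T) (hz : z ∈ T) : |⟪y - z, u⟫| ≤ suppNorm (T - T) u := by
    have hle {y z} (hy : y ∈ T) (hz : z ∈ T) : ⟪y - z, u⟫ ≤ suppNorm (T - T) u :=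
      inner_le_suppNorm hbdd (Set.sub_mem_sub hy hz) u
    exact abs_le'.2 ⟨hle hy hz, by rw [← inner_neg_left, neg_sub]; exact hle hz hy⟩
  have hA : A ∈ T := hmem (by simp)
  have hB : B ∈ T := hmem (by simp)
  have hC : C ∈ T := hmem (by simp)
  have hsum : ⟪B - A, u⟫ + ⟪C - B, u⟫ + ⟪A - C, u⟫ = 0 := by
    simp_rw [← inner_add_left]
    simp
  have hsq := sum_sq_le_two_mul_sq hsum (hedge hB hA) (hedge hC hB) (hedge hA hC)
  rw [sum_sq_inner_edge hpos hAB hBC] at hsq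
  refine le_of_sq_le_sq ?_ ((abs_nonneg _).trans (hedge hA hA))
  rw [mul_pow, mul_pow, div_pow, Real.sq_sqrt (by norm_num)]
  linarith

theorem isConvexBody_convexHull_range {n : ℕ} {ι : Type*} [Finite ι]
    (b : AffineBasis ι ℝ (EuclideanSpace ℝ (Fin n))) :
    IsConvexBody (convexHull ℝ (Set.range b)) := by
  have := Fintype.ofFinite ι
  exact ⟨(Set.finite_range b).isCompact_convexHull ℝ, convex_convexHull ℝ _,
    _, b.centroid_mem_interior_convexHull⟩

theorem xiB_sub_self_convexHull_equilateral {A B C : EuclideanSpace ℝ (Fin 2)}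
    (hpos : 0 < dist A B) (hAB : dist A B = dist B C) (hBC : dist B C = dist C A) :
    xiB (convexHull ℝ {A, B, C} - convexHull ℝ {A, B, C}) =
      4 / √3 * xiB (convexHull ℝ {A, B, C}) := by
  obtain ⟨b, hb⟩ := exists_affineBasis_coe_eq finrank_euclideanSpace_fin
    (not_collinear_of_dist_eq hpos hAB hBC)
  have hrange : Set.range b = {A, B, C} := by
    rw [hb, Matrix.range_cons, Matrix.range_cons_cons_empty, Set.singleton_union]
  have hbody := hrange ▸ isConvexBody_convexHull_range b
  have hupper : xiB (convexHull ℝ {A, B, C}) ≤ 3 / 2 * dist A B := by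
    have h := xiB_convexHull_triangle_le b
    rw [hrange, hb] at h
    refine h.trans_eq ?_
    change (dist A B + dist B C + dist C A) / 2 = _
    rw [← hBC, ← hAB]
    ring
  refine le_antisymm ?_ ?_
  · simpa [jungConstant_two, div_eq_mul_inv] using xiB_sub_self_le hbody
  · calc 4 / √3 * xiB (convexHull ℝ {A, B, C}) ≤ 4 / √3 * (3 / 2 * dist A B) := by gcongr
      _ = 4 * (√3 / 2 * dist A B) := by
        field_simp
        norm_num
      _ ≤ _ := four_mul_le_xiB_of_ball_subset (hbody.1.isBounded.sub hbody.1.isBounded)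
        (ball_subset_convexHull_sub_self hpos hAB hBC)

end EquilateralTriangle

theorem xiB_diff_le_and_sharp_general :
    (∀ (n : ℕ) [NeZero n] (K : Set (EuclideanSpace ℝ (Fin n))), IsConvexBody K →
      xiB (K - K) ≤ 4 * jungConstant n * xiB K) ∧
    (∀ A B C : EuclideanSpace ℝ (Fin 2), 0 < dist A B → dist A B = dist B C →
      dist B C = dist C A →
      xiB (convexHull ℝ {A, B, C} - convexHull ℝ {A, B, C}) =
        (4 / Real.sqrt 3) * xiB (convexHull ℝ {A, B, C})) :=
  ⟨fun _ _ _ hK => xiB_sub_self_le hK,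
    fun _ _ _ hpos hAB hBC => xiB_sub_self_convexHull_equilateral hpos hAB hBC⟩

/-- Euclidean Rogers–Shepard type inequality: `ξ_B(K−K) ≤ (4/√3) ξ_B(K)` for planar
convex bodies, with equality for equilateral triangles (sharpness). -/
theorem xiB_diff_le_and_sharp :
    (∀ K : Set (EuclideanSpace ℝ (Fin 2)), IsConvexBody K →
      xiB (K - K) ≤ (4 / Real.sqrt 3) * xiB K) ∧
    (∀ A B C : EuclideanSpace ℝ (Fin 2), 0 < dist A B → dist A B = dist B C →
      dist B C = dist C A →
      xiB (convexHull ℝ {A, B, C} - convexHull ℝ {A, B, C}) =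
        (4 / Real.sqrt 3) * xiB (convexHull ℝ {A, B, C})) := by
  refine ⟨fun K hK => ?_, xiB_diff_le_and_sharp_general.2⟩
  simpa only [jungConstant_two, mul_one_div] using xiB_diff_le_and_sharp_general.1 2 K hK
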